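/- Let n ∈ ℕ. There exist constants c₁(n), c₂(n) > 0 such that for every finitely supported family of reals (α_{k,j})_{k,j∈ℕ}, setting f(x,t) := Σ_{k,j} α_{k,j} H_k(t) P̃_j(x), one has c₁(n) Σ_{k≥n, j≥n} α_{k,j}² kⁿ j^{2n} ≤ ∫_ℝ ∫_{−1}^{1} ( ∂ⁿ_t ∂ⁿ_x f(x,t) )² (1−x²)ⁿ dx dγ(t) ≤ c₂(n) Σ_{k≥n, j≥n} α_{k,j}² kⁿ j^{2n}. -/

import Mathlib

/-!
In both families the `n`-th derivatives stay orthogonal, so the integral is diagonal in the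
`α_{k,j}` and everything reduces to two families of norms.

By Stein's identity the creation operator `p ↦ X p - p'`, which generates the Hermite polynomials,
is adjoint to differentiation in `L²(γ)`, so `∫ He_k q dγ = ∫ q^{(k)} dγ`. As `He_k^{(n)}` is a
multiple of `He_{k-n}`, the `H_k^{(n)}` are orthogonal with squared norms `k! / (k - n)!`.

On `(-1, 1)`, Rodrigues' formula and `j` integrations by parts show that the inner product of
`P_j` with a polynomial of degree at most `j` depends only on its coefficient of `x^j`. With the
weight `(1 - x²)ⁿ`, moving `n` derivatives over replaces `P_j` by `Dⁿ ((1 - x²)ⁿ Dⁿ P_j)`, which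
again has degree at most `j`, with leading coefficient multiplied by `(-1)ⁿ (j + n)! / (j - n)!`.

Hence the integral is `∑ α_{k,j}² · k! / (k - n)! · (j + n)! / (j - n)!`. As descending factorials
these quotients vanish for `k < n` or `j < n`, and otherwise each factor is comparable to `k` or
`j`.
-/

open MeasureTheory Polynomial ProbabilityTheory

/-- Legendre polynomial of degree `j` via Rodrigues' formula. -/
noncomputable def legendreP (j : ℕ) : Polynomial ℝ :=
  Polynomial.C ((2 ^ j * Nat.factorial j : ℝ)⁻¹) *
    (Polynomial.derivative^[j] ((Polynomial.X ^ 2 - 1) ^ j))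

/-- Normalized Legendre polynomial, orthonormal in `L²((-1,1))`. -/
noncomputable def legendreN (j : ℕ) : Polynomial ℝ :=
  Polynomial.C (Real.sqrt ((2 * j + 1) / 2)) * legendreP j

/-- Normalized (probabilist's) Hermite polynomial, orthonormal in `L²(ℝ, γ)`. -/
noncomputable def hermiteN (k : ℕ) : Polynomial ℝ :=
  Polynomial.C ((Real.sqrt (Nat.factorial k))⁻¹) *
    (Polynomial.hermite k).map (Int.castRingHom ℝ)

open scoped Nat NNReal

section WeightedOrthogonal

theorem sum_mul_sq_mul {X ι : Type*} (u : ι → X → ℝ) (w : X → ℝ) (S : Finset ι) (c : ι → ℝ)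
    (x : X) : (∑ i ∈ S, c i * u i x) ^ 2 * w x =
      ∑ i ∈ S, ∑ j ∈ S, c i * c j * (u i x * u j x * w x) := by
  rw [sq, Finset.sum_mul_sum, Finset.sum_mul]
  simp only [Finset.sum_mul]
  exact Finset.sum_congr rfl fun i _ => Finset.sum_congr rfl fun j _ => by ring

variable {X Y ι κ : Type*} [MeasurableSpace X] [MeasurableSpace Y]

/-- The functions `u i` are pairwise orthogonal in `L²(w μ)`, with squared norms `a i`. The weight
`w` is kept apart from `μ`, so that the integrals appear as `∫ x, u i x * u j x * w x ∂μ`. -/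
structure IsWeightedOrthogonal (μ : Measure X) (w : X → ℝ) (u : ι → X → ℝ) (a : ι → ℝ) :
    Prop where
  integrable_mul : ∀ i j, Integrable (fun x => u i x * u j x * w x) μ
  integral_mul_of_ne : ∀ i j, i ≠ j → ∫ x, u i x * u j x * w x ∂μ = 0
  integral_mul_self : ∀ i, ∫ x, u i x * u i x * w x ∂μ = a i

namespace IsWeightedOrthogonal

variable {μ : Measure X} {ν : Measure Y} {w : X → ℝ} {w' : Y → ℝ} {u : ι → X → ℝ}
  {v : κ → Y → ℝ} {a : ι → ℝ} {b : κ → ℝ}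

theorem integrable_sum_sq (h : IsWeightedOrthogonal μ w u a) (S : Finset ι) (c : ι → ℝ) :
    Integrable (fun x => (∑ i ∈ S, c i * u i x) ^ 2 * w x) μ := by
  simp only [sum_mul_sq_mul]
  exact integrable_finsetSum _ fun i _ => integrable_finsetSum _ fun j _ =>
    (h.integrable_mul i j).const_mul _

theorem integral_sum_sq (h : IsWeightedOrthogonal μ w u a) (S : Finset ι) (c : ι → ℝ) :
    ∫ x, (∑ i ∈ S, c i * u i x) ^ 2 * w x ∂μ = ∑ i ∈ S, c i ^ 2 * a i := by
  have hint (i j : ι) : Integrable (fun x => c i * c j * (u i x * u j x * w x)) μ :=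
    (h.integrable_mul i j).const_mul _
  simp only [sum_mul_sq_mul]
  rw [integral_finsetSum _ fun i _ => integrable_finsetSum _ fun j _ => hint i j]
  refine Finset.sum_congr rfl fun i hi => ?_
  rw [integral_finsetSum _ fun j _ => hint i j, Finset.sum_eq_single_of_mem i hi,
    integral_const_mul, h.integral_mul_self, sq]
  intro j _ hji
  rw [integral_const_mul, h.integral_mul_of_ne i j hji.symm, mul_zero]

theorem const_mul (h : IsWeightedOrthogonal μ w u a) (c : ι → ℝ) :
    IsWeightedOrthogonal μ w (fun i x => c i * u i x) (fun i => c i ^ 2 * a i) := by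
  have hscale (i j : ι) (x : X) :
      c i * u i x * (c j * u j x) * w x = c i * c j * (u i x * u j x * w x) := by ring
  constructor
  · intro i j
    simpa only [hscale] using (h.integrable_mul i j).const_mul (c i * c j)
  · intro i j hij
    simp only [hscale]
    rw [integral_const_mul, h.integral_mul_of_ne i j hij, mul_zero]
  · intro i
    simp only [hscale]
    rw [integral_const_mul, h.integral_mul_self, sq]

theorem prod [SFinite μ] [SFinite ν] (hu : IsWeightedOrthogonal μ w u a)
    (hv : IsWeightedOrthogonal ν w' v b) :
    IsWeightedOrthogonal (μ.prod ν) (fun z => w z.1 * w' z.2)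
      (fun (p : ι × κ) z => u p.1 z.1 * v p.2 z.2) (fun p => a p.1 * b p.2) := by
  have hsplit (p q : ι × κ) (z : X × Y) :
      u p.1 z.1 * v p.2 z.2 * (u q.1 z.1 * v q.2 z.2) * (w z.1 * w' z.2) =
        (u p.1 z.1 * u q.1 z.1 * w z.1) * (v p.2 z.2 * v q.2 z.2 * w' z.2) := by ring
  have hintegral (p q : ι × κ) :
      ∫ z, u p.1 z.1 * v p.2 z.2 * (u q.1 z.1 * v q.2 z.2) * (w z.1 * w' z.2) ∂μ.prod ν =
        (∫ x, u p.1 x * u q.1 x * w x ∂μ) * ∫ y, v p.2 y * v q.2 y * w' y ∂ν := by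
    simp only [hsplit]
    exact integral_prod_mul (fun x => u p.1 x * u q.1 x * w x) fun y => v p.2 y * v q.2 y * w' y
  constructor
  · intro p q
    simp only [hsplit]
    exact (hu.integrable_mul p.1 q.1).mul_prod (hv.integrable_mul p.2 q.2)
  · intro p q hpq
    rw [hintegral]
    by_cases h : p.1 = q.1
    · rw [hv.integral_mul_of_ne p.2 q.2 fun h' => hpq (Prod.ext h h'), mul_zero]
    · rw [hu.integral_mul_of_ne p.1 q.1 h, zero_mul]
  · intro p
    rw [hintegral, hu.integral_mul_self, hv.integral_mul_self]

theorem integral_integral_sum_sq [SFinite μ] [SFinite ν] (hu : IsWeightedOrthogonal μ w u a)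
    (hv : IsWeightedOrthogonal ν w' v b) (S : Finset (ι × κ)) (c : ι × κ → ℝ) :
    ∫ x, ∫ y, (∑ p ∈ S, c p * (u p.1 x * v p.2 y)) ^ 2 * (w x * w' y) ∂ν ∂μ =
      ∑ p ∈ S, c p ^ 2 * (a p.1 * b p.2) :=
  (integral_integral ((hu.prod hv).integrable_sum_sq S c)).trans
    ((hu.prod hv).integral_sum_sq S c)

end IsWeightedOrthogonal

end WeightedOrthogonal

section PolynomialDerivative

theorem iteratedDeriv_polynomial_eval {𝕜 : Type*} [NontriviallyNormedField 𝕜] (p : 𝕜[X])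
    (n : ℕ) : iteratedDeriv n (fun x => p.eval x) = fun x => (derivative^[n] p).eval x := by
  induction n with
  | zero => simp
  | succ n ih =>
    ext x
    rw [iteratedDeriv_succ, ih, Polynomial.deriv, Function.iterate_succ_apply']

theorem iteratedDeriv_sum_mul_polynomial_eval {𝕜 ι : Type*} [NontriviallyNormedField 𝕜]
    (S : Finset ι) (c : ι → 𝕜) (p : ι → 𝕜[X]) (n : ℕ) (x : 𝕜) :
    iteratedDeriv n (fun y => ∑ i ∈ S, c i * (p i).eval y) x =
      ∑ i ∈ S, c i * (derivative^[n] (p i)).eval x := by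
  simpa only [eval_finsetSum, eval_C_mul, iterate_derivative_sum, iterate_derivative_C_mul]
    using congrFun (iteratedDeriv_polynomial_eval (∑ i ∈ S, C (c i) * p i) n) x

theorem iterate_derivative_eq_C_of_natDegree_le {R : Type*} [Semiring R] {p : R[X]} {n : ℕ}
    (hp : p.natDegree ≤ n) : derivative^[n] p = C (n ! • p.coeff n) := by
  have hconst : (derivative^[n] p).natDegree ≤ 0 :=
    (natDegree_iterate_derivative p n).trans (by omega)
  rw [eq_C_of_natDegree_le_zero hconst, coeff_iterate_derivative, zero_add, Nat.descFactorial_self]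

theorem integral_derivative_mul_eval (p q : ℝ[X]) {a b : ℝ} (ha : p.eval a = 0)
    (hb : p.eval b = 0) :
    ∫ x in a..b, (derivative p).eval x * q.eval x =
      -∫ x in a..b, p.eval x * (derivative q).eval x := by
  rw [intervalIntegral.integral_mul_deriv_eq_deriv_mul (fun x _ => p.hasDerivAt x)
    (fun x _ => q.hasDerivAt x) ((derivative p).continuous.intervalIntegrable _ _)
    ((derivative q).continuous.intervalIntegrable _ _), ha, hb]
  ring

theorem integral_iterate_derivative_mul_eval (n : ℕ) {p : ℝ[X]} (q : ℝ[X]) {a b : ℝ}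
    (hp : ((X - C a) * (X - C b)) ^ n ∣ p) :
    ∫ x in a..b, (derivative^[n] p).eval x * q.eval x =
      (-1) ^ n * ∫ x in a..b, p.eval x * (derivative^[n] q).eval x := by
  induction n generalizing p with
  | zero => simp
  | succ n ih =>
    have hroots : (X - C a) * (X - C b) ∣ p := (dvd_pow_self _ n.succ_ne_zero).trans hp
    have ha : p.eval a = 0 := eval_eq_zero_of_dvd_of_eval_eq_zero hroots (by simp)
    have hb : p.eval b = 0 := eval_eq_zero_of_dvd_of_eval_eq_zero hroots (by simp)
    have hp' : ((X - C a) * (X - C b)) ^ n ∣ derivative p := by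
      simpa using pow_sub_one_dvd_derivative_of_pow_dvd hp
    rw [Function.iterate_succ_apply, ih hp', integral_derivative_mul_eval p _ ha hb,
      Function.iterate_succ_apply', pow_succ]
    ring

end PolynomialDerivative

section Gaussian

theorem integrable_gaussianReal_iff_integrable_smul {E : Type*} [NormedAddCommGroup E]
    [NormedSpace ℝ E] {μ : ℝ} {v : ℝ≥0} (hv : v ≠ 0) {f : ℝ → E} :
    Integrable f (gaussianReal μ v) ↔ Integrable fun x => gaussianPDFReal μ v x • f x := by
  rw [gaussianReal_of_var_ne_zero _ hv,
    integrable_withDensity_iff_integrable_smul' (measurable_gaussianPDF _ _)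
      (ae_of_all _ fun _ => gaussianPDF_lt_top)]
  simp only [toReal_gaussianPDF]

theorem hasDerivAt_gaussianPDFReal (μ : ℝ) (v : ℝ≥0) (x : ℝ) :
    HasDerivAt (gaussianPDFReal μ v) (-((x - μ) / v) * gaussianPDFReal μ v x) x := by
  have hexponent : HasDerivAt (fun y : ℝ => -(y - μ) ^ 2 / (2 * v)) (-((x - μ) / v)) x := by
    refine ((((hasDerivAt_id x).sub_const μ).pow 2).neg.div_const _).congr_deriv ?_
    simp only [Nat.cast_ofNat, id_eq, Nat.add_one_sub_one, pow_one, mul_one]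
    ring
  refine (hexponent.exp.const_mul (√(2 * Real.pi * v))⁻¹).congr_deriv ?_
  rw [gaussianPDFReal]
  ring

/-- Stein's identity. -/
theorem integral_sub_smul_gaussianReal {E : Type*} [NormedAddCommGroup E] [NormedSpace ℝ E]
    [CompleteSpace E] {μ : ℝ} {v : ℝ≥0} {f f' : ℝ → E} (hderiv : ∀ x, HasDerivAt f (f' x) x)
    (hf : Integrable f (gaussianReal μ v)) (hf' : Integrable f' (gaussianReal μ v))
    (hxf : Integrable (fun x => (x - μ) • f x) (gaussianReal μ v)) :
    ∫ x, (x - μ) • f x ∂gaussianReal μ v = v • ∫ x, f' x ∂gaussianReal μ v := by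
  rcases eq_or_ne v 0 with rfl | hv
  · simp
  have hv' : (v : ℝ) ≠ 0 := by exact_mod_cast hv
  have hdensity (x : ℝ) : HasDerivAt (fun y => gaussianPDFReal μ v y • f y)
      (gaussianPDFReal μ v x • (f' x - (v : ℝ)⁻¹ • ((x - μ) • f x))) x := by
    refine ((hasDerivAt_gaussianPDFReal μ v x).smul (hderiv x)).congr_deriv ?_
    module
  have hscaled : Integrable (fun x => (v : ℝ)⁻¹ • ((x - μ) • f x)) (gaussianReal μ v) :=
    hxf.smul _
  have hzero := integral_eq_zero_of_hasDerivAt_of_integrable hdensity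
    ((integrable_gaussianReal_iff_integrable_smul hv).1 (hf'.sub hscaled))
    ((integrable_gaussianReal_iff_integrable_smul hv).1 hf)
  rw [← integral_gaussianReal_eq_integral_smul hv, integral_sub hf' hscaled,
    integral_smul, sub_eq_zero] at hzero
  rw [hzero, NNReal.smul_def, smul_inv_smul₀ hv']

theorem integrable_polynomial_eval_gaussianReal (μ : ℝ) (v : ℝ≥0) (p : ℝ[X]) :
    Integrable (fun x => p.eval x) (gaussianReal μ v) := by
  simp only [eval_eq_sum_range]
  refine integrable_finsetSum _ fun m _ => Integrable.const_mul ?_ _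
  exact (memLp_id_gaussianReal (m : ℝ≥0)).integrable_norm_pow'.mono' (by fun_prop)
    (ae_of_all _ fun x => (norm_pow x m).le)

end Gaussian

section Hermite

theorem derivative_hermite_succ (k : ℕ) :
    derivative (hermite (k + 1)) = (k + 1) • hermite k := by
  induction k with
  | zero => simp
  | succ k ih =>
    rw [hermite_succ (k + 1), derivative_sub, derivative_mul, derivative_X, ih, derivative_smul,
      hermite_succ k]
    simp only [nsmul_eq_mul]
    push_cast
    ring

theorem iterate_derivative_hermite (n k : ℕ) :
    derivative^[n] (hermite k) = k.descFactorial n • hermite (k - n) := by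
  induction n generalizing k with
  | zero => simp
  | succ n ih =>
    cases k with
    | zero => simp
    | succ k =>
      rw [Function.iterate_succ_apply, derivative_hermite_succ, iterate_derivative_smul, ih,
        smul_smul, Nat.succ_descFactorial_succ, Nat.add_sub_add_right]

theorem integral_X_mul_sub_derivative_mul_gaussianReal (p q : ℝ[X]) :
    ∫ t, (X * p - derivative p).eval t * q.eval t ∂gaussianReal 0 1 =
      ∫ t, p.eval t * (derivative q).eval t ∂gaussianReal 0 1 := by
  have hint (r : ℝ[X]) := integrable_polynomial_eval_gaussianReal 0 1 r
  have hstein : ∫ t, (X * (p * q)).eval t ∂gaussianReal 0 1 =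
      ∫ t, (derivative (p * q)).eval t ∂gaussianReal 0 1 := by
    simpa using integral_sub_smul_gaussianReal (μ := 0) (v := 1) (p * q).hasDerivAt (hint _)
      (hint _) ((hint (X * (p * q))).congr (ae_of_all _ fun t => by simp))
  have hleibniz : (X * p - derivative p) * q =
      X * (p * q) - derivative (p * q) + p * derivative q := by
    rw [derivative_mul]
    ring
  simp only [← eval_mul, hleibniz, eval_add]
  rw [integral_add (hint _) (hint _)]
  simp only [eval_sub]
  rw [integral_sub (hint _) (hint _), hstein, sub_self, zero_add]

theorem integral_aeval_hermite_mul (k : ℕ) (q : ℝ[X]) :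
    ∫ t, aeval t (hermite k) * q.eval t ∂gaussianReal 0 1 =
      ∫ t, (derivative^[k] q).eval t ∂gaussianReal 0 1 := by
  induction k generalizing q with
  | zero => simp
  | succ k ih =>
    have hcreation (t : ℝ) : aeval t (hermite (k + 1)) =
        (X * (hermite k).map (Int.castRingHom ℝ) -
          derivative ((hermite k).map (Int.castRingHom ℝ))).eval t := by
      simp [hermite_succ, derivative_map, aeval_def, eval₂_eq_eval_map]
    simp only [hcreation]
    rw [integral_X_mul_sub_derivative_mul_gaussianReal, Function.iterate_succ_apply, ← ih]
    simp [aeval_def, eval₂_eq_eval_map]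

theorem integral_aeval_hermite_mul_aeval_hermite (k l : ℕ) :
    ∫ t, aeval t (hermite k) * aeval t (hermite l) ∂gaussianReal 0 1 =
      if k = l then (k ! : ℝ) else 0 := by
  wlog hlk : l ≤ k generalizing k l
  · simpa [mul_comm, eq_comm, show k ≠ l by omega] using this l k (by omega)
  have hderiv : derivative^[k] ((hermite l).map (Int.castRingHom ℝ)) =
      C (k ! • ((hermite l).coeff k : ℝ)) := by
    rw [iterate_derivative_eq_C_of_natDegree_le (natDegree_map_le.trans (by simpa)), coeff_map]
    rfl
  have h := integral_aeval_hermite_mul k ((hermite l).map (Int.castRingHom ℝ))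
  simp only [hderiv, eval_C, integral_const, probReal_univ, one_smul] at h
  simp only [aeval_def, eval₂_eq_eval_map, algebraMap_int_eq] at h ⊢
  rw [h]
  rcases hlk.eq_or_lt with rfl | hlk
  · simp
  · simp [coeff_hermite_of_lt hlk, hlk.ne']

theorem eval_iterate_derivative_hermiteN (n k : ℕ) (t : ℝ) :
    (derivative^[n] (hermiteN k)).eval t =
      (√(k ! : ℝ))⁻¹ * k.descFactorial n * aeval t (hermite (k - n)) := by
  simp [hermiteN, iterate_derivative_C_mul, iterate_derivative_map, iterate_derivative_hermite,
    aeval_def, eval₂_eq_eval_map, mul_assoc]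

theorem isWeightedOrthogonal_iterate_derivative_hermiteN (n : ℕ) :
    IsWeightedOrthogonal (gaussianReal 0 1) (fun _ => 1)
      (fun k t => (derivative^[n] (hermiteN k)).eval t) (fun k => (k.descFactorial n : ℝ)) := by
  have hintegral (k l : ℕ) :
      ∫ t, (derivative^[n] (hermiteN k)).eval t * (derivative^[n] (hermiteN l)).eval t * 1
          ∂gaussianReal 0 1 =
        (√(k ! : ℝ))⁻¹ * k.descFactorial n * ((√(l ! : ℝ))⁻¹ * l.descFactorial n) *
          if k - n = l - n then ((k - n)! : ℝ) else 0 := by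
    simp only [eval_iterate_derivative_hermiteN, mul_one, mul_mul_mul_comm _ (aeval _ _)]
    rw [integral_const_mul, integral_aeval_hermite_mul_aeval_hermite]
  constructor
  · intro k l
    simpa using integrable_polynomial_eval_gaussianReal 0 1
      (derivative^[n] (hermiteN k) * derivative^[n] (hermiteN l))
  · intro k l hkl
    rw [hintegral]
    rcases lt_or_ge k n with hk | hk
    · simp [Nat.descFactorial_of_lt hk]
    rcases lt_or_ge l n with hl | hl
    · simp [Nat.descFactorial_of_lt hl]
    · simp [show k - n ≠ l - n by omega]
  · intro k
    rw [hintegral, if_pos rfl]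
    rcases lt_or_ge k n with hk | hk
    · simp [Nat.descFactorial_of_lt hk]
    have hfactorial : ((k - n)! : ℝ) * k.descFactorial n = k ! := by
      exact_mod_cast Nat.factorial_mul_descFactorial hk
    have hsqrt : (√(k ! : ℝ))⁻¹ * (√(k ! : ℝ))⁻¹ = (k ! : ℝ)⁻¹ := by
      rw [← mul_inv, Real.mul_self_sqrt (by positivity)]
    calc _ = (√(k ! : ℝ))⁻¹ * (√(k ! : ℝ))⁻¹ * (((k - n)! : ℝ) * k.descFactorial n) *
          k.descFactorial n := by ring
      _ = k.descFactorial n := by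
        rw [hsqrt, hfactorial, inv_mul_cancel₀ (by positivity), one_mul]

end Hermite

section Legendre

theorem integral_one_sub_sq_pow (m : ℕ) :
    ∫ x in (-1 : ℝ)..1, (1 - x ^ 2) ^ m = 2 * (2 ^ m * m ! : ℝ) ^ 2 / (2 * m + 1)! := by
  have hcos := integral_sin_pow_odd_mul_cos_pow (a := 0) (b := Real.pi) m 0
  simp only [pow_zero, mul_one, one_mul, Real.cos_zero, Real.cos_pi] at hcos
  rw [← hcos, integral_sin_pow_odd, mul_div_assoc]
  congr 1
  clear hcos
  induction m with
  | zero => simp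
  | succ m ih =>
    rw [Finset.prod_range_succ, ih, show 2 * (m + 1) + 1 = (2 * m + 1) + 1 + 1 by ring]
    simp only [Nat.factorial_succ]
    push_cast
    field_simp
    ring

section LegendreOp

variable {R : Type*} [CommRing R]

/-- The differential operator `p ↦ Dⁿ ((1 - x²)ⁿ Dⁿ p)`, which for `n = 1` is Legendre's operator
`p ↦ ((1 - x²) p')'`. Up to the sign `(-1)ⁿ` it represents the bilinear form
`∫ p⁽ⁿ⁾ q⁽ⁿ⁾ (1 - x²)ⁿ dx` in `L²((-1, 1))`. -/
noncomputable def legendreOp (n : ℕ) (p : R[X]) : R[X] :=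
  derivative^[n] ((1 - X ^ 2) ^ n * derivative^[n] p)

theorem natDegree_one_sub_X_sq_pow_le (n : ℕ) : ((1 - X ^ 2 : R[X]) ^ n).natDegree ≤ n * 2 :=
  natDegree_pow_le_of_le n (by compute_degree)

theorem natDegree_legendreOp_le (n : ℕ) (p : R[X]) : (legendreOp n p).natDegree ≤ p.natDegree := by
  rcases lt_or_ge p.natDegree n with h | h
  · simp [legendreOp, iterate_derivative_eq_zero h]
  calc (legendreOp n p).natDegree
      ≤ ((1 - X ^ 2) ^ n * derivative^[n] p).natDegree - n := natDegree_iterate_derivative _ _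
    _ ≤ n * 2 + (p.natDegree - n) - n := Nat.sub_le_sub_right (natDegree_mul_le_of_le
        (natDegree_one_sub_X_sq_pow_le n) (natDegree_iterate_derivative p n)) n
    _ = p.natDegree := by omega

theorem coeff_legendreOp {p : R[X]} {j : ℕ} (hp : p.natDegree ≤ j) (n : ℕ) :
    (legendreOp n p).coeff j = (-1) ^ n * (j + n).descFactorial (2 * n) * p.coeff j := by
  rcases lt_or_ge j n with h | h
  · simp [legendreOp, iterate_derivative_eq_zero (hp.trans_lt h),
      Nat.descFactorial_of_lt (show j + n < 2 * n by omega)]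
  have hlead : ((1 - X ^ 2) ^ n * derivative^[n] p).coeff (n * 2 + (j - n)) =
      (-1) ^ n * (j.descFactorial n * p.coeff j) := by
    rw [coeff_mul_add_eq_of_natDegree_le (natDegree_one_sub_X_sq_pow_le n)
        ((natDegree_iterate_derivative p n).trans (Nat.sub_le_sub_right hp n)),
      coeff_pow_of_natDegree_le (by compute_degree), coeff_iterate_derivative,
      Nat.sub_add_cancel h, nsmul_eq_mul]
    simp [coeff_one]
  have hfactorial : (j + n).descFactorial n * j.descFactorial n =
      (j + n).descFactorial (2 * n) := by
    rw [mul_comm, ← Nat.descFactorial_mul_descFactorial (show n ≤ 2 * n by omega),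
      Nat.add_sub_cancel, two_mul, Nat.add_sub_cancel]
  rw [legendreOp, coeff_iterate_derivative, show j + n = n * 2 + (j - n) by omega, hlead,
    show n * 2 + (j - n) = j + n by omega, ← hfactorial]
  push_cast
  ring

end LegendreOp

theorem integral_iterate_derivative_mul_one_sub_sq_pow (n : ℕ) (p q : ℝ[X]) :
    ∫ x in (-1 : ℝ)..1, (derivative^[n] p).eval x * (derivative^[n] q).eval x * (1 - x ^ 2) ^ n =
      (-1) ^ n * ∫ x in (-1 : ℝ)..1, p.eval x * (legendreOp n q).eval x := by
  have hdvd : ((X - C (-1)) * (X - C 1) : ℝ[X]) ^ n ∣ (1 - X ^ 2) ^ n * derivative^[n] q :=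
    Dvd.dvd.mul_right (pow_dvd_pow_of_dvd ⟨-1, by rw [C_neg, C_1]; ring⟩ n) _
  have h := integral_iterate_derivative_mul_eval n p hdvd
  simp only [← legendreOp.eq_1, mul_comm (eval _ (legendreOp n q))] at h
  rw [h, ← mul_assoc, ← mul_pow, neg_one_mul, neg_neg, one_pow, one_mul]
  refine intervalIntegral.integral_congr fun x _ => ?_
  simp only [eval_mul, eval_pow, eval_sub, eval_one, eval_X]
  ring

theorem integral_legendreP_mul (j : ℕ) (q : ℝ[X]) :
    ∫ x in (-1 : ℝ)..1, (legendreP j).eval x * q.eval x =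
      (2 ^ j * j ! : ℝ)⁻¹ * ∫ x in (-1 : ℝ)..1, (1 - x ^ 2) ^ j * (derivative^[j] q).eval x := by
  have hroots : ((X - C (-1)) * (X - C 1) : ℝ[X]) = X ^ 2 - 1 := by
    rw [C_neg, C_1]
    ring
  have h := integral_iterate_derivative_mul_eval (a := -1) (b := 1) j q
    (p := (X ^ 2 - 1) ^ j) (by rw [hroots])
  simp only [legendreP, eval_C_mul, mul_assoc]
  rw [intervalIntegral.integral_const_mul, h, ← intervalIntegral.integral_const_mul]
  congr 2 with x
  rw [← mul_assoc]
  simp [← mul_pow]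

theorem integral_legendreP_mul_of_natDegree_le {q : ℝ[X]} {j : ℕ} (hq : q.natDegree ≤ j) :
    ∫ x in (-1 : ℝ)..1, (legendreP j).eval x * q.eval x =
      2 * (2 ^ j * (j ! : ℝ) ^ 2) / (2 * j + 1)! * q.coeff j := by
  rw [integral_legendreP_mul, iterate_derivative_eq_C_of_natDegree_le hq]
  simp only [eval_C]
  rw [intervalIntegral.integral_mul_const, integral_one_sub_sq_pow, nsmul_eq_mul]
  field_simp

theorem natDegree_legendreP_le (j : ℕ) : (legendreP j).natDegree ≤ j := by
  have hpow : ((X ^ 2 - 1 : ℝ[X]) ^ j).natDegree ≤ j * 2 :=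
    natDegree_pow_le_of_le j (by compute_degree)
  calc (legendreP j).natDegree
      ≤ (derivative^[j] ((X ^ 2 - 1 : ℝ[X]) ^ j)).natDegree := natDegree_C_mul_le _ _
    _ ≤ ((X ^ 2 - 1 : ℝ[X]) ^ j).natDegree - j := natDegree_iterate_derivative _ _
    _ ≤ j := by omega

theorem coeff_legendreP_self (j : ℕ) :
    (legendreP j).coeff j = (2 * j)! / (2 ^ j * (j ! : ℝ) ^ 2) := by
  have hmonic : ((X ^ 2 - 1 : ℝ[X]) ^ j).coeff (j + j) = 1 := by
    rw [← mul_two, coeff_pow_of_natDegree_le (by compute_degree)]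
    simp [coeff_one]
  have hfactorial : (j ! : ℝ) * (j + j).descFactorial j = (2 * j)! := by
    have h : j ! * (j + j).descFactorial j = (j + j)! := by
      simpa using Nat.factorial_mul_descFactorial (Nat.le_add_left j j)
    rw [two_mul]
    exact_mod_cast h
  rw [legendreP, coeff_C_mul, coeff_iterate_derivative, hmonic, ← hfactorial]
  simp only [mul_inv_rev, nsmul_eq_mul, mul_one]
  field_simp

theorem isWeightedOrthogonal_iterate_derivative_legendreP (n : ℕ) :
    IsWeightedOrthogonal (volume.restrict (Set.Ioc (-1) 1)) (fun x => (1 - x ^ 2) ^ n)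
      (fun j x => (derivative^[n] (legendreP j)).eval x)
      (fun j => 2 / (2 * j + 1) * (j + n).descFactorial (2 * n)) := by
  have hzero {i j : ℕ} (h : j < i) :
      ∫ x in Set.Ioc (-1 : ℝ) 1, (derivative^[n] (legendreP i)).eval x *
        (derivative^[n] (legendreP j)).eval x * (1 - x ^ 2) ^ n = 0 := by
    have hdeg : (legendreOp n (legendreP j)).natDegree < i :=
      (natDegree_legendreOp_le n _).trans_lt ((natDegree_legendreP_le j).trans_lt h)
    rw [← intervalIntegral.integral_of_le (by norm_num),
      integral_iterate_derivative_mul_one_sub_sq_pow,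
      integral_legendreP_mul_of_natDegree_le hdeg.le, coeff_eq_zero_of_natDegree_lt hdeg]
    simp
  constructor
  · intro i j
    have hcont : Continuous fun x : ℝ => (derivative^[n] (legendreP i)).eval x *
      (derivative^[n] (legendreP j)).eval x * (1 - x ^ 2) ^ n := by fun_prop
    exact (hcont.intervalIntegrable (-1) 1).1
  · intro i j hij
    rcases hij.lt_or_gt with h | h
    · simpa only [mul_comm (eval _ (derivative^[n] (legendreP i)))] using hzero h
    · exact hzero h
  · intro j
    rw [← intervalIntegral.integral_of_le (by norm_num),
      integral_iterate_derivative_mul_one_sub_sq_pow,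
      integral_legendreP_mul_of_natDegree_le
        ((natDegree_legendreOp_le n _).trans (natDegree_legendreP_le j)),
      coeff_legendreOp (natDegree_legendreP_le j), coeff_legendreP_self, Nat.factorial_succ]
    have hsign : ((-1 : ℝ) ^ n) * (-1) ^ n = 1 := by simp [← mul_pow]
    push_cast
    field_simp
    linear_combination ((j + n).descFactorial (2 * n) : ℝ) * hsign

theorem isWeightedOrthogonal_iterate_derivative_legendreN (n : ℕ) :
    IsWeightedOrthogonal (volume.restrict (Set.Ioc (-1) 1)) (fun x => (1 - x ^ 2) ^ n)
      (fun j x => (derivative^[n] (legendreN j)).eval x)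
      (fun j => ((j + n).descFactorial (2 * n) : ℝ)) := by
  have h := (isWeightedOrthogonal_iterate_derivative_legendreP n).const_mul
    fun j => √((2 * j + 1) / 2)
  have hnorm (j : ℕ) : (√((2 * j + 1) / 2)) ^ 2 * (2 / (2 * j + 1) *
      ((j + n).descFactorial (2 * n) : ℝ)) = (j + n).descFactorial (2 * n) := by
    rw [Real.sq_sqrt (by positivity)]
    field_simp
  simpa only [hnorm, legendreN, iterate_derivative_C_mul, eval_C_mul] using h

end Legendre

section PowerSpectrum

theorem iteratedDeriv_iteratedDeriv_tsum_hermiteN_mul_legendreN {α : ℕ × ℕ → ℝ}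
    (hα : (Function.support α).Finite) (m n : ℕ) (x t : ℝ) :
    iteratedDeriv m (fun s => iteratedDeriv n (fun y =>
      ∑' p : ℕ × ℕ, α p * (hermiteN p.1).eval s * (legendreN p.2).eval y) x) t =
      ∑ p ∈ hα.toFinset,
        α p * ((derivative^[m] (hermiteN p.1)).eval t *
          (derivative^[n] (legendreN p.2)).eval x) := by
  have hsum (s y : ℝ) : ∑' p : ℕ × ℕ, α p * (hermiteN p.1).eval s * (legendreN p.2).eval y =
      ∑ p ∈ hα.toFinset, α p * (hermiteN p.1).eval s * (legendreN p.2).eval y :=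
    tsum_eq_sum fun p hp => by simp_all
  have hswap (s : ℝ) : ∑ p ∈ hα.toFinset,
        α p * (hermiteN p.1).eval s * (derivative^[n] (legendreN p.2)).eval x =
      ∑ p ∈ hα.toFinset,
        α p * (derivative^[n] (legendreN p.2)).eval x * (hermiteN p.1).eval s :=
    Finset.sum_congr rfl fun p _ => mul_right_comm _ _ _
  simp only [hsum, iteratedDeriv_sum_mul_polynomial_eval, hswap]
  exact Finset.sum_congr rfl fun p _ => by ring

theorem integral_sq_iteratedDeriv_hermiteN_mul_legendreN {α : ℕ × ℕ → ℝ}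
    (hα : (Function.support α).Finite) (m n : ℕ) :
    ∫ t, (∫ x in (-1 : ℝ)..1,
      (iteratedDeriv m (fun s : ℝ => iteratedDeriv n (fun y : ℝ =>
        ∑' p : ℕ × ℕ, α p * (hermiteN p.1).eval s * (legendreN p.2).eval y) x) t) ^ 2 *
          (1 - x ^ 2) ^ n) ∂gaussianReal 0 1 =
      ∑ p ∈ hα.toFinset,
        α p ^ 2 * (p.1.descFactorial m * (p.2 + n).descFactorial (2 * n) : ℝ) := by
  have h := (isWeightedOrthogonal_iterate_derivative_hermiteN m).integral_integral_sum_sq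
    (isWeightedOrthogonal_iterate_derivative_legendreN n) hα.toFinset α
  simpa only [iteratedDeriv_iteratedDeriv_tsum_hermiteN_mul_legendreN hα, one_mul,
    intervalIntegral.integral_of_le (show (-1 : ℝ) ≤ 1 by norm_num)] using h

theorem pow_le_pow_mul_descFactorial {a m N r : ℕ} (h : m ≤ a * (N + 1 - r)) :
    m ^ r ≤ a ^ r * N.descFactorial r :=
  calc m ^ r ≤ (a * (N + 1 - r)) ^ r := Nat.pow_le_pow_left h r
    _ = a ^ r * (N + 1 - r) ^ r := mul_pow _ _ _
    _ ≤ a ^ r * N.descFactorial r := Nat.mul_le_mul_left _ (Nat.pow_sub_le_descFactorial N r)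

theorem le_succ_mul_succ_sub {n m : ℕ} (h : n ≤ m) : m ≤ (n + 1) * (m + 1 - n) := by
  obtain ⟨i, rfl⟩ := Nat.exists_eq_add_of_le h
  rw [show n + i + 1 - n = i + 1 by omega]
  nlinarith

theorem pow_mul_pow_le_mul_descFactorial {n k j : ℕ} (hk : n ≤ k) (hj : n ≤ j) :
    k ^ n * j ^ (2 * n) ≤
      (n + 1) ^ (3 * n) * (k.descFactorial n * (j + n).descFactorial (2 * n)) := by
  have hj' : j ≤ (n + 1) * (j + n + 1 - 2 * n) :=
    (le_succ_mul_succ_sub hj).trans_eq (by congr 1; omega)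
  calc k ^ n * j ^ (2 * n)
      ≤ ((n + 1) ^ n * k.descFactorial n) *
          ((n + 1) ^ (2 * n) * (j + n).descFactorial (2 * n)) :=
        Nat.mul_le_mul (pow_le_pow_mul_descFactorial (le_succ_mul_succ_sub hk))
          (pow_le_pow_mul_descFactorial hj')
    _ = _ := by ring

theorem descFactorial_mul_descFactorial_le {n j : ℕ} (k : ℕ) (hj : n ≤ j) :
    k.descFactorial n * (j + n).descFactorial (2 * n) ≤ 4 ^ n * (k ^ n * j ^ (2 * n)) :=
  calc k.descFactorial n * (j + n).descFactorial (2 * n)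
      ≤ k ^ n * (j + n) ^ (2 * n) :=
        Nat.mul_le_mul (Nat.descFactorial_le_pow k n) (Nat.descFactorial_le_pow _ _)
    _ ≤ k ^ n * (2 * j) ^ (2 * n) := by gcongr; omega
    _ = 4 ^ n * (k ^ n * j ^ (2 * n)) := by
      rw [mul_pow, pow_mul 2]
      ring

theorem descFactorial_mul_descFactorial_eq_zero {n k j : ℕ} (h : ¬(n ≤ k ∧ n ≤ j)) :
    k.descFactorial n * (j + n).descFactorial (2 * n) = 0 := by
  rw [mul_eq_zero, Nat.descFactorial_eq_zero_iff_lt, Nat.descFactorial_eq_zero_iff_lt]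
  omega

theorem inv_mul_ite_le_sq_mul_descFactorial (n k j : ℕ) (a : ℝ) :
    ((n + 1 : ℝ) ^ (3 * n))⁻¹ *
        (if n ≤ k ∧ n ≤ j then a ^ 2 * (k : ℝ) ^ n * (j : ℝ) ^ (2 * n) else 0) ≤
      a ^ 2 * (k.descFactorial n * (j + n).descFactorial (2 * n)) := by
  split_ifs with h
  · have hbound : (k : ℝ) ^ n * (j : ℝ) ^ (2 * n) ≤
        (n + 1) ^ (3 * n) * (k.descFactorial n * (j + n).descFactorial (2 * n)) := by
      exact_mod_cast pow_mul_pow_le_mul_descFactorial h.1 h.2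
    rw [inv_mul_le_iff₀ (by positivity), mul_assoc, mul_left_comm (_ ^ (3 * n))]
    exact mul_le_mul_of_nonneg_left hbound (sq_nonneg a)
  · rw [mul_zero]
    positivity

theorem sq_mul_descFactorial_le_mul_ite (n k j : ℕ) (a : ℝ) :
    a ^ 2 * (k.descFactorial n * (j + n).descFactorial (2 * n)) ≤ (4 : ℝ) ^ n *
      (if n ≤ k ∧ n ≤ j then a ^ 2 * (k : ℝ) ^ n * (j : ℝ) ^ (2 * n) else 0) := by
  split_ifs with h
  · have hbound : (k.descFactorial n * (j + n).descFactorial (2 * n) : ℝ) ≤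
        4 ^ n * ((k : ℝ) ^ n * (j : ℝ) ^ (2 * n)) := by
      exact_mod_cast descFactorial_mul_descFactorial_le k h.2
    rw [mul_assoc, mul_left_comm (4 ^ n)]
    exact mul_le_mul_of_nonneg_left hbound (sq_nonneg a)
  · have hzero : (k.descFactorial n * (j + n).descFactorial (2 * n) : ℝ) = 0 := by
      exact_mod_cast descFactorial_mul_descFactorial_eq_zero h
    rw [hzero, mul_zero, mul_zero]

end PowerSpectrum

theorem stmt2 (n : ℕ) :
    ∃ c₁ c₂ : ℝ, 0 < c₁ ∧ 0 < c₂ ∧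
      ∀ α : ℕ × ℕ → ℝ, (Function.support α).Finite →
        c₁ * (∑' p : ℕ × ℕ, if n ≤ p.1 ∧ n ≤ p.2 then
                (α p) ^ 2 * (p.1 : ℝ) ^ n * (p.2 : ℝ) ^ (2 * n) else 0)
          ≤ (∫ t, (∫ x in (-1 : ℝ)..1,
              (iteratedDeriv n (fun s : ℝ => iteratedDeriv n (fun y : ℝ =>
                  ∑' p : ℕ × ℕ, α p * (hermiteN p.1).eval s * (legendreN p.2).eval y) x) t) ^ 2
                * (1 - x ^ 2) ^ n) ∂(gaussianReal 0 1)) ∧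
        (∫ t, (∫ x in (-1 : ℝ)..1,
              (iteratedDeriv n (fun s : ℝ => iteratedDeriv n (fun y : ℝ =>
                  ∑' p : ℕ × ℕ, α p * (hermiteN p.1).eval s * (legendreN p.2).eval y) x) t) ^ 2
                * (1 - x ^ 2) ^ n) ∂(gaussianReal 0 1))
          ≤ c₂ * (∑' p : ℕ × ℕ, if n ≤ p.1 ∧ n ≤ p.2 then
                (α p) ^ 2 * (p.1 : ℝ) ^ n * (p.2 : ℝ) ^ (2 * n) else 0) := by
  refine ⟨((n + 1 : ℝ) ^ (3 * n))⁻¹, 4 ^ n, by positivity, by positivity, fun α hα => ?_⟩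
  rw [integral_sq_iteratedDeriv_hermiteN_mul_legendreN hα,
    tsum_eq_sum (s := hα.toFinset) fun p hp => by simp_all, Finset.mul_sum, Finset.mul_sum]
  exact ⟨Finset.sum_le_sum fun p _ => inv_mul_ite_le_sq_mul_descFactorial n p.1 p.2 (α p),
    Finset.sum_le_sum fun p _ => sq_mul_descFactorial_le_mul_ite n p.1 p.2 (α p)⟩
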